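/- Let k be a field, R = k[x_1,…,x_d], T = k[y_1,…,y_n], and B = R ⊗_k T, bigraded by bideg x_i = (1,0) and bideg y_j = (0,1). Let f_1,…,f_d be a B-regular sequence of bihomogeneous elements contained in m = (x_1,…,x_d)B with bideg f_i = (α_i,β_i), and set S = B/(f_1,…,f_d), δ = (Σ_{i=1}^d α_i) − d, τ = Σ_{i=1}^d β_i. Then there is a bihomogeneous isomorphism of B-modules H^0_m(S) ≅ Hom_T(S,T)(−δ,−τ). -/

import Mathlib

/-!
STATEMENT 0 (Jouanolou-type duality for bigraded complete intersections):
`B = k[x_1,…,x_d] ⊗_k k[y_1,…,y_n]`, bigraded with `bideg x_i = (1,0)`, `bideg y_j = (0,1)`.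
If `f_1,…,f_d` is a `B`-regular sequence of bihomogeneous elements contained in
`m = (x_1,…,x_d)B` with `bideg f_i = (α_i, β_i)` and `S = B/(f_1,…,f_d)`, then there is a
bihomogeneous isomorphism of `B`-modules `H⁰_m(S) ≅ Hom_T(S,T)(−δ,−τ)` where
`δ = (Σ α_i) − d` and `τ = Σ β_i`.
-/

open MvPolynomial

noncomputable section

namespace Stmt0

variable (k : Type) [Field k] (d n : ℕ)

/-- `B = R ⊗_k T = k[x_1,…,x_d,y_1,…,y_n]`. -/
abbrev B := MvPolynomial (Fin d ⊕ Fin n) k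

/-- `T = k[y_1,…,y_n]`. -/
abbrev T := MvPolynomial (Fin n) k

/-- `B` is a `T`-algebra via `y_j ↦ y_j`. -/
instance : Algebra (T k n) (B k d n) :=
  ((rename Sum.inr : T k n →ₐ[k] B k d n).toRingHom).toAlgebra

/-- The bigrading weight: `bideg x_i = (1,0)`, `bideg y_j = (0,1)`. -/
def bwt : (Fin d ⊕ Fin n) → ℕ × ℕ := Sum.elim (fun _ => (1, 0)) (fun _ => (0, 1))

/-- The ideal `m = (x_1,…,x_d)B`. -/
def mxB : Ideal (B k d n) := Ideal.span (Set.range fun i : Fin d => (X (Sum.inl i) : B k d n))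

variable (I : Ideal (B k d n))

/-- `H⁰_m(S)`: the elements of `S = B/I` annihilated by a power of `m`. -/
def H0 : Submodule (B k d n) (B k d n ⧸ I) :=
  ⨆ N : ℕ, Submodule.torsionBySet (B k d n) (B k d n ⧸ I)
    ((mxB k d n ^ N : Ideal (B k d n)) : Set (B k d n))

/-- The bigraded component of `S = B/I` in bidegree `p` (image of the bihomogeneous
component of `B` of bidegree `p`). -/
def Scomp (p : ℕ × ℕ) : Submodule k (B k d n ⧸ I) :=
  (weightedHomogeneousSubmodule k (bwt d n) p).map (Ideal.Quotient.mkₐ k I).toLinearMap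

/-- The graded component of `T` in (possibly negative) degree `j`. -/
def TcompZ (j : ℤ) : Submodule k (T k n) :=
  if 0 ≤ j then homogeneousSubmodule (Fin n) k j.toNat else ⊥

set_option synthInstance.maxHeartbeats 1000000
set_option maxHeartbeats 1600000

/-- The action of `S = B/I` on `Hom_T(S,T)` through the source. -/
instance dualSMul : SMul (B k d n ⧸ I) ((B k d n ⧸ I) →ₗ[T k n] T k n) :=
  ⟨fun s φ => φ.comp (LinearMap.mulLeft (T k n) s)⟩

theorem dual_smul_apply (s x : B k d n ⧸ I) (φ : (B k d n ⧸ I) →ₗ[T k n] T k n) :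
    (s • φ) x = φ (s * x) := rfl

/-- `Hom_T(S,T)` is a module over `S = B/I`, via the action on the source. -/
instance dualModS : Module (B k d n ⧸ I) ((B k d n ⧸ I) →ₗ[T k n] T k n) where
  one_smul φ := LinearMap.ext fun x => by rw [dual_smul_apply, one_mul]
  mul_smul a b φ := LinearMap.ext fun x => by
    rw [dual_smul_apply, dual_smul_apply, dual_smul_apply, mul_left_comm, mul_assoc]
  smul_zero s := rfl
  smul_add s φ ψ := rfl
  add_smul a b φ := LinearMap.ext fun x => by
    rw [dual_smul_apply, add_mul, map_add]; rfl
  zero_smul φ := LinearMap.ext fun x => by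
    rw [dual_smul_apply, zero_mul, map_zero]; rfl

/-- `Hom_T(S,T)` is a `B`-module, via `B → S`. -/
instance dualModB : Module (B k d n) ((B k d n ⧸ I) →ₗ[T k n] T k n) :=
  Module.compHom _ (algebraMap (B k d n) (B k d n ⧸ I))

/-- The bigraded component of bidegree `(u,v)` of the bigraded `B`-module `Hom_T(S,T)`:
a `T`-linear map `φ` is bihomogeneous of bidegree `(u,v)` if for every bihomogeneous
`s ∈ S` of bidegree `(p,q)` the element `φ(s)` is homogeneous of degree `q + v` in `T`,
and `φ(s) = 0` unless `p + u = 0` (as `T` is concentrated in `x`-degree `0`). -/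
def HomComp (u v : ℤ) : Set ((B k d n ⧸ I) →ₗ[T k n] T k n) :=
  {φ | ∀ (p q : ℕ) (s : B k d n ⧸ I), s ∈ Scomp k d n I (p, q) →
      φ s ∈ TcompZ k n ((q : ℤ) + v) ∧ (((p : ℤ) + u ≠ 0) → φ s = 0)}

/-!
For weakly regular sequences `f` and `g` of the same length `d` in a commutative ring `A`, both the
`(g)`-torsion of `A/(f)` and the `(f)`-torsion of `A/(g)` are a `Tor`, or Koszul cohomology, module
of the pair: lifting an element of `A/(f)` killed by `(g)` through the Koszul complexes of `g` over
`A/(f₀, …, f_{m-1})`, for `m = d, …, 0`, links it to an element of `A/(g)` killed by `(f)`. This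
linkage shifts degrees by the difference of the degrees of `∏ g` and `∏ f`.

Take `g = (x₁^{N+1}, …, x_d^{N+1})` over `B` and `I = (f)`. The ring `B/(g)` is free over `T` and
the residue, the coefficient of `(x₁⋯x_d)^N`, makes it self-dual. Hence its `I`-torsion is the
module of functionals on `B/I` killed by `(g)`. For large `N` the `(g)`-torsion of `B/I` is all of
`H⁰_m`, so the functionals killed by `(g)` do not grow with `N` any more. It follows that every
functional on `B/I` is killed by `(g)`, because it is a locally finite sum of its components of
fixed `x`-degree, each of which is killed by some power of `m`.
-/

section InitialIdeal

variable {A : Type*} [CommRing A] {f : ℕ → A}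

/-- The ideal `(f₀, …, f_{m-1})` generated by the first `m` terms of a sequence. -/
def initialIdeal (f : ℕ → A) (m : ℕ) : Ideal A := Ideal.span (f '' Set.Iio m)

/-- The first `d` terms of the sequence `f` form a weakly regular sequence: each `fᵢ` is a
nonzerodivisor modulo the preceding ones. -/
def IsWeaklyRegularUpTo (f : ℕ → A) (d : ℕ) : Prop :=
  ∀ i < d, ∀ b, f i * b ∈ initialIdeal f i → b ∈ initialIdeal f i

lemma IsWeaklyRegularUpTo.of_succ {m : ℕ} (h : IsWeaklyRegularUpTo f (m + 1)) :
    IsWeaklyRegularUpTo f m :=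
  fun i hi => h i (hi.trans m.lt_succ_self)

lemma initialIdeal_zero (f : ℕ → A) : initialIdeal f 0 = ⊥ := by
  simp [initialIdeal]

lemma initialIdeal_succ (f : ℕ → A) (m : ℕ) :
    initialIdeal f (m + 1) = Ideal.span {f m} ⊔ initialIdeal f m := by
  rw [initialIdeal, initialIdeal, ← Ideal.span_union, ← Set.image_singleton, ← Set.image_union]
  congr 2
  ext i
  simp [le_iff_eq_or_lt]

lemma mem_initialIdeal_succ {m : ℕ} {b : A} :
    b ∈ initialIdeal f (m + 1) ↔ ∃ c, b - f m * c ∈ initialIdeal f m := by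
  rw [initialIdeal_succ, Ideal.mem_span_singleton_sup]
  constructor
  · rintro ⟨c, b', hb', rfl⟩
    exact ⟨c, by rwa [mul_comm, add_sub_cancel_left]⟩
  · rintro ⟨c, hc⟩
    exact ⟨c, _, hc, by ring⟩

lemma initialIdeal_le_succ (f : ℕ → A) (m : ℕ) : initialIdeal f m ≤ initialIdeal f (m + 1) :=
  initialIdeal_succ f m ▸ le_sup_right

lemma mul_mem_initialIdeal {m i : ℕ} (h : i < m) (b : A) : f i * b ∈ initialIdeal f m :=
  Ideal.mul_mem_right _ _ (Ideal.subset_span ⟨i, h, rfl⟩)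

end InitialIdeal

section Koszul

variable {A : Type*} [CommRing A] {g : ℕ → A} {m : ℕ} {q : ℤ}

/-- The standard basis of the Koszul complex on `m` elements, that is, the subsets of
`{0, …, m - 1}`: `Sum.inr` marks the subsets of `{0, …, m}` containing `m`. -/
def KoszulIndex : ℕ → Type
  | 0 => Unit
  | m + 1 => KoszulIndex m ⊕ KoszulIndex m

namespace KoszulIndex

/-- The empty subset. -/
def bot : ∀ m, KoszulIndex m
  | 0 => ()
  | m + 1 => Sum.inl (bot m)

/-- The subset `{0, …, m - 1}`. -/
def top : ∀ m, KoszulIndex m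
  | 0 => ()
  | m + 1 => Sum.inr (top m)

/-- The sum of the weights `γ j` over the members `j` of a subset of `{0, …, m - 1}`. -/
def weight {Γ : Type*} [AddCommMonoid Γ] (γ : ℕ → Γ) : ∀ {m}, KoszulIndex m → Γ
  | 0, _ => 0
  | _ + 1, .inl i => weight γ i
  | m + 1, .inr i => weight γ i + γ m

/-- The cardinality of a subset, as an integer so that degrees can be shifted freely. -/
def degree {m : ℕ} (i : KoszulIndex m) : ℤ := weight (fun _ => 1) i

lemma weight_bot {Γ : Type*} [AddCommMonoid Γ] (γ : ℕ → Γ) (m : ℕ) : weight γ (bot m) = 0 := by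
  induction m with
  | zero => rfl
  | succ _ ih => exact ih

lemma weight_top {Γ : Type*} [AddCommMonoid Γ] (γ : ℕ → Γ) (m : ℕ) :
    weight γ (top m) = ∑ j ∈ Finset.range m, γ j := by
  induction m with
  | zero => rfl
  | succ m ih => rw [Finset.sum_range_succ, ← ih]; rfl

lemma degree_nonneg (i : KoszulIndex m) : 0 ≤ degree i := by
  induction m with
  | zero => exact le_rfl
  | succ m ih => exact i.rec ih fun j => add_nonneg (ih j) zero_le_one

lemma degree_le (i : KoszulIndex m) : degree i ≤ m := by
  induction m with
  | zero => exact le_rfl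
  | succ m ih =>
    push_cast
    exact i.rec (fun j => (ih j).trans (lt_add_one _).le) fun j => add_le_add_left (ih j) 1

lemma degree_bot (m : ℕ) : degree (bot m) = 0 := weight_bot _ m

lemma degree_top (m : ℕ) : degree (top m) = m := by
  simp [degree, weight_top]

lemma eq_bot_of_degree_eq_zero {i : KoszulIndex m} (h : degree i = 0) : i = bot m := by
  induction m with
  | zero => rfl
  | succ m ih =>
    rcases i with i | i
    · exact congrArg Sum.inl (ih h)
    · exact absurd h (add_pos_of_nonneg_of_pos (degree_nonneg i) one_pos).ne'

lemma eq_top_of_degree_eq {i : KoszulIndex m} (h : degree i = m) : i = top m := by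
  induction m with
  | zero => rfl
  | succ m ih =>
    push_cast at h
    rcases i with i | i
    · exact absurd h ((degree_le i).trans_lt (lt_add_one _)).ne
    · exact congrArg Sum.inr (ih (add_right_cancel h))

end KoszulIndex

open KoszulIndex

/-- The differential `v ↦ (∑ gⱼ eⱼ) ∧ v` of the Koszul cochain complex on `g₀, …, g_{m-1}`, up to
the signs of the basis vectors. -/
def koszulDiff (g : ℕ → A) : ∀ m, (KoszulIndex m → A) →ₗ[A] (KoszulIndex m → A)
  | 0 => 0
  | m + 1 =>
    let D := koszulDiff g m
    let l := LinearMap.funLeft A A (Sum.inl : KoszulIndex m → KoszulIndex (m + 1))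
    let r := LinearMap.funLeft A A (Sum.inr : KoszulIndex m → KoszulIndex (m + 1))
    (LinearEquiv.sumArrowLequivProdArrow (KoszulIndex m) (KoszulIndex m) A A).symm.toLinearMap ∘ₗ
      (D ∘ₗ l).prod (g m • l - D ∘ₗ r)

/-- The Koszul cochains of degree `q`. -/
def koszulCochains (A : Type*) [CommRing A] (m : ℕ) (q : ℤ) : Submodule A (KoszulIndex m → A) where
  carrier := {v | ∀ i, degree i ≠ q → v i = 0}
  add_mem' hv hw i hi := by simp [hv i hi, hw i hi]
  zero_mem' _ _ := rfl
  smul_mem' c v hv i hi := by simp [hv i hi]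

/-- The Koszul cochain of degree `q` with all coefficients equal to `t`. -/
def constCochain (m : ℕ) (q : ℤ) (t : A) : KoszulIndex m → A :=
  fun i => if degree i = q then t else 0

lemma koszulDiff_inl (v : KoszulIndex (m + 1) → A) (i : KoszulIndex m) :
    koszulDiff g (m + 1) v (Sum.inl i) = koszulDiff g m (v ∘ Sum.inl) i := rfl

lemma koszulDiff_inr (v : KoszulIndex (m + 1) → A) (i : KoszulIndex m) :
    koszulDiff g (m + 1) v (Sum.inr i) =
      (g m • (v ∘ Sum.inl) - koszulDiff g m (v ∘ Sum.inr)) i := rfl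

lemma koszulDiff_comp_inl (v : KoszulIndex (m + 1) → A) :
    koszulDiff g (m + 1) v ∘ Sum.inl = koszulDiff g m (v ∘ Sum.inl) := rfl

lemma koszulDiff_comp_inr (v : KoszulIndex (m + 1) → A) :
    koszulDiff g (m + 1) v ∘ Sum.inr = g m • (v ∘ Sum.inl) - koszulDiff g m (v ∘ Sum.inr) := rfl

lemma koszulDiff_koszulDiff (v : KoszulIndex m → A) : koszulDiff g m (koszulDiff g m v) = 0 := by
  induction m with
  | zero => rfl
  | succ m ih =>
    funext i
    rcases i with i | i
    · rw [koszulDiff_inl, koszulDiff_comp_inl, ih]; rfl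
    · rw [koszulDiff_inr, koszulDiff_comp_inl, koszulDiff_comp_inr, map_sub, map_smul, ih,
        sub_zero, sub_self]; rfl

lemma koszulDiff_mem_ideal {J : Ideal A} {v : KoszulIndex m → A} (hv : ∀ i, v i ∈ J)
    (i : KoszulIndex m) : koszulDiff g m v i ∈ J := by
  induction m with
  | zero => exact J.zero_mem
  | succ m ih =>
    rcases i with i | i
    · exact ih (fun j => hv (.inl j)) i
    · exact J.sub_mem (J.mul_mem_left _ (hv (.inl i))) (ih (fun j => hv (.inr j)) i)

lemma mem_koszulCochains_succ {v : KoszulIndex (m + 1) → A} :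
    v ∈ koszulCochains A (m + 1) q ↔
      v ∘ Sum.inl ∈ koszulCochains A m q ∧ v ∘ Sum.inr ∈ koszulCochains A m (q - 1) := by
  refine ⟨fun h => ⟨fun i => h (.inl i), fun i hi => h (.inr i) fun h' => hi (eq_sub_of_add_eq h')⟩,
    fun h i hi => ?_⟩
  rcases i with i | i
  · exact h.1 i hi
  · exact h.2 i fun h' => hi (eq_sub_iff_add_eq.1 h')

lemma eq_zero_of_mem_koszulCochains {v : KoszulIndex m → A} (hv : v ∈ koszulCochains A m q)
    (hq : q < 0 ∨ m < q) : v = 0 :=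
  funext fun i => hv i fun h => by
    have h₀ := degree_nonneg i
    have h₁ := degree_le i
    omega

lemma koszulDiff_mem_koszulCochains {v : KoszulIndex m → A} (hv : v ∈ koszulCochains A m q) :
    koszulDiff g m v ∈ koszulCochains A m (q + 1) := by
  induction m generalizing q with
  | zero => exact Submodule.zero_mem _
  | succ m ih =>
    obtain ⟨hl, hr⟩ := mem_koszulCochains_succ.1 hv
    have hr' := ih hr
    rw [sub_add_cancel] at hr'
    refine mem_koszulCochains_succ.2 ⟨ih hl, ?_⟩
    rw [koszulDiff_comp_inr, add_sub_cancel_right]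
    exact Submodule.sub_mem _ (Submodule.smul_mem _ _ hl) hr'

lemma constCochain_mem (t : A) : constCochain m q t ∈ koszulCochains A m q :=
  fun _ hi => if_neg hi

lemma constCochain_zero_bot (t : A) : constCochain m 0 t (bot m) = t := if_pos (degree_bot m)

lemma constCochain_top (t : A) : constCochain m m t (top m) = t := if_pos (degree_top m)

lemma mem_ideal_of_top_mem {J : Ideal A} {v : KoszulIndex m → A} (hv : v ∈ koszulCochains A m m)
    (h : v (top m) ∈ J) (i : KoszulIndex m) : v i ∈ J := by
  by_cases hi : degree i = m
  · exact eq_top_of_degree_eq hi ▸ h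
  · exact hv i hi ▸ J.zero_mem

lemma mem_ideal_of_bot_mem {J : Ideal A} {v : KoszulIndex m → A} (hv : v ∈ koszulCochains A m 0)
    (h : v (bot m) ∈ J) (i : KoszulIndex m) : v i ∈ J := by
  by_cases hi : degree i = 0
  · exact eq_bot_of_degree_eq_zero hi ▸ h
  · exact hv i hi ▸ J.zero_mem

lemma eq_of_top_eq {v w : KoszulIndex m → A} (hv : v ∈ koszulCochains A m m)
    (hw : w ∈ koszulCochains A m m) (h : v (top m) = w (top m)) : v = w :=
  sub_eq_zero.1 <| funext fun i =>
    mem_ideal_of_top_mem (J := ⊥) (Submodule.sub_mem _ hv hw) (sub_eq_zero.2 h) i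

lemma koszulDiff_top_mem (v : KoszulIndex m → A) :
    koszulDiff g m v (top m) ∈ initialIdeal g m := by
  induction m with
  | zero => exact Ideal.zero_mem _
  | succ m ih =>
    exact Ideal.sub_mem _ (mul_mem_initialIdeal m.lt_succ_self _)
      (initialIdeal_le_succ g m (ih (v ∘ Sum.inr)))

lemma exists_koszulDiff_top_eq {t : A} (ht : t ∈ initialIdeal g m) :
    ∃ w ∈ koszulCochains A m (m - 1), koszulDiff g m w (top m) = t := by
  induction m generalizing t with
  | zero =>
    rw [initialIdeal_zero, Ideal.mem_bot] at ht
    exact ⟨0, Submodule.zero_mem _, ht.symm⟩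
  | succ m ih =>
    obtain ⟨c, hc⟩ := mem_initialIdeal_succ.1 ht
    obtain ⟨w, hw, hwt⟩ := ih hc
    refine ⟨Sum.elim (constCochain m m c) (-w), mem_koszulCochains_succ.2 ?_, ?_⟩
    · push_cast
      rw [add_sub_cancel_right]
      exact ⟨constCochain_mem c, Submodule.neg_mem _ hw⟩
    · change g m * constCochain m m c (top m) - koszulDiff g m (-w) (top m) = t
      rw [constCochain_top, map_neg, Pi.neg_apply, hwt]
      ring

lemma koszulDiff_mem_ideal_iff_of_degree_zero {J : Ideal A} {v : KoszulIndex m → A}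
    (hv : v ∈ koszulCochains A m 0) :
    (∀ i, koszulDiff g m v i ∈ J) ↔ ∀ j < m, g j * v (bot m) ∈ J := by
  induction m with
  | zero => exact ⟨fun _ j hj => absurd hj j.not_lt_zero, fun _ _ => J.zero_mem⟩
  | succ m ih =>
    obtain ⟨hl, hr⟩ := mem_koszulCochains_succ.1 hv
    have hr0 := eq_zero_of_mem_koszulCochains hr (.inl (by norm_num))
    have hinr (i : KoszulIndex m) : koszulDiff g (m + 1) v (.inr i) = g m * v (.inl i) := by
      rw [koszulDiff_inr, hr0, map_zero, sub_zero]; rfl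
    rw [Nat.forall_lt_succ_right]
    refine Iff.trans ?_ (and_congr_left fun _ => ih hl)
    constructor
    · exact fun h => ⟨fun i => h (.inl i),
        (hinr (bot m) ▸ h (.inr (bot m)) : g m * v (.inl (bot m)) ∈ J)⟩
    · rintro ⟨h, h'⟩ (i | i)
      · exact h i
      · exact hinr i ▸ mem_ideal_of_bot_mem (Submodule.smul_mem _ _ hl) h' i

lemma exists_koszulDiff_eq (hg : IsWeaklyRegularUpTo g m) (hq : q < m) {v : KoszulIndex m → A}
    (hv : v ∈ koszulCochains A m q) (hDv : koszulDiff g m v = 0) :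
    ∃ w ∈ koszulCochains A m (q - 1), koszulDiff g m w = v := by
  induction m generalizing q with
  | zero => exact ⟨0, Submodule.zero_mem _, (eq_zero_of_mem_koszulCochains hv (.inl hq)).symm⟩
  | succ m ih =>
    obtain ⟨hl, hr⟩ := mem_koszulCochains_succ.1 hv
    have hDl : koszulDiff g m (v ∘ Sum.inl) = 0 := funext fun i => congrFun hDv (.inl i)
    have hDr : g m • (v ∘ Sum.inl) = koszulDiff g m (v ∘ Sum.inr) :=
      sub_eq_zero.1 (funext fun i => congrFun hDv (.inr i))
    obtain ⟨a, ha, haD⟩ : ∃ a ∈ koszulCochains A m (q - 1), koszulDiff g m a = v ∘ Sum.inl := by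
      rcases (Int.lt_add_one_iff.1 (by exact_mod_cast hq : q < m + 1)).lt_or_eq with h | rfl
      · exact ih hg.of_succ h hl hDl
      · have htop : g m * v (.inl (top m)) ∈ initialIdeal g m :=
          Eq.mpr (congrArg (· ∈ _) (congrFun hDr (top m))) (koszulDiff_top_mem _)
        obtain ⟨a, ha, hat⟩ := exists_koszulDiff_top_eq (hg m m.lt_succ_self _ htop)
        refine ⟨a, ha, eq_of_top_eq ?_ hl hat⟩
        simpa using koszulDiff_mem_koszulCochains (g := g) ha
    obtain ⟨b, hb, hbD⟩ := ih hg.of_succ (q := q - 1) (by push_cast at hq; omega)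
      (Submodule.sub_mem _ (Submodule.smul_mem _ (g m) ha) hr)
      (by rw [map_sub, map_smul, haD, hDr, sub_self])
    refine ⟨Sum.elim a b, mem_koszulCochains_succ.2 ⟨ha, hb⟩, ?_⟩
    funext i
    rcases i with i | i
    · exact congrFun haD i
    · change (g m • a - koszulDiff g m b) i = v (.inr i)
      rw [hbD, sub_sub_cancel]; rfl

lemma koszulDiff_component {Γ : Type*} [AddCommGroup Γ] (π : Γ → A →+ A) {γ : ℕ → Γ}
    (hg : ∀ j < m, ∀ p a, π (p + γ j) (g j * a) = g j * π p a) (p : Γ) (v : KoszulIndex m → A) :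
    (fun i => π (p + weight γ i) (koszulDiff g m v i)) =
      koszulDiff g m fun i => π (p + weight γ i) (v i) := by
  induction m generalizing p with
  | zero => exact funext fun _ => map_zero _
  | succ m ih =>
    have ih' := ih fun j hj => hg j (hj.trans m.lt_succ_self)
    funext i
    rcases i with i | i
    · exact congrFun (ih' p (v ∘ Sum.inl)) i
    · have hr := congrFun (ih' (p + γ m) (v ∘ Sum.inr)) i
      have hp (j : KoszulIndex m) : p + (weight γ j + γ m) = p + γ m + weight γ j := by abel
      change π (p + (weight γ i + γ m)) (g m * v (.inl i) - koszulDiff g m (v ∘ Sum.inr) i) =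
        g m * π (p + weight γ i) (v (.inl i)) -
          koszulDiff g m (fun j => π (p + (weight γ j + γ m)) (v (.inr j))) i
      rw [map_sub, ← add_assoc, hg m m.lt_succ_self, add_assoc, hp]
      simp only [hp]
      exact congrArg _ hr

end Koszul

section Zigzag

open KoszulIndex

variable {d} {A : Type*} [CommRing A] {f g : ℕ → A} {m : ℕ} {q : ℤ} {v u : KoszulIndex d → A}

lemma exists_mem_koszulCochains_sub_smul_mem (hv : v ∈ koszulCochains A d q)
    (hvJ : ∀ i, v i ∈ initialIdeal f (m + 1)) :
    ∃ u ∈ koszulCochains A d q, ∀ i, (v - f m • u) i ∈ initialIdeal f m := by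
  choose c hc using fun i => mem_initialIdeal_succ.1 (hvJ i)
  refine ⟨fun i => if degree i = q then c i else 0, fun i hi => if_neg hi, fun i => ?_⟩
  by_cases hi : degree i = q
  · simpa [hi] using hc i
  · simp [hi, hv i hi]

lemma sub_mem_initialIdeal_succ (h : ∀ i, (v - f m • u) i ∈ initialIdeal f m)
    (i : KoszulIndex d) : v i ∈ initialIdeal f (m + 1) :=
  mem_initialIdeal_succ.2 ⟨u i, h i⟩

lemma koszulDiff_mem_of_koszulDiff_sub_smul_mem (hf : IsWeaklyRegularUpTo f (m + 1))
    (h : ∀ i, (koszulDiff g d v - f m • u) i ∈ initialIdeal f m) (i : KoszulIndex d) :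
    koszulDiff g d u i ∈ initialIdeal f m := by
  have hD := koszulDiff_mem_ideal (g := g) h i
  rw [map_sub, koszulDiff_koszulDiff, zero_sub, map_smul] at hD
  exact hf m m.lt_succ_self _ (neg_mem_iff.1 hD)

lemma koszulDiff_sub_smul_mem {z : KoszulIndex d → A}
    (hv : ∀ i, (koszulDiff g d v - f m • u) i ∈ initialIdeal f m)
    (hu : ∀ i, (u - koszulDiff g d z) i ∈ initialIdeal f m) (i : KoszulIndex d) :
    koszulDiff g d (v - f m • z) i ∈ initialIdeal f m := by
  have h : koszulDiff g d (v - f m • z) =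
      (koszulDiff g d v - f m • u) + f m • (u - koszulDiff g d z) := by
    rw [map_sub, map_smul, smul_sub, sub_add_sub_cancel]
  rw [h]
  exact Ideal.add_mem _ (hv i) (Ideal.mul_mem_left _ (f m) (hu i))

lemma exists_sub_koszulDiff_mem (hg : IsWeaklyRegularUpTo g d) (hf : IsWeaklyRegularUpTo f m)
    (hq : q < d - m) (hv : v ∈ koszulCochains A d q)
    (hDv : ∀ i, koszulDiff g d v i ∈ initialIdeal f m) :
    ∃ w ∈ koszulCochains A d (q - 1), ∀ i, (v - koszulDiff g d w) i ∈ initialIdeal f m := by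
  induction m generalizing q v with
  | zero =>
    simp only [initialIdeal_zero, Ideal.mem_bot] at hDv
    obtain ⟨w, hw, rfl⟩ := exists_koszulDiff_eq hg (by simpa using hq) hv (funext hDv)
    exact ⟨w, hw, fun i => by simp⟩
  | succ m ih =>
    push_cast at hq
    obtain ⟨u, hu, huv⟩ :=
      exists_mem_koszulCochains_sub_smul_mem (koszulDiff_mem_koszulCochains hv) hDv
    obtain ⟨z, hz, hzu⟩ := ih hf.of_succ (by omega) hu
      (koszulDiff_mem_of_koszulDiff_sub_smul_mem hf huv)
    rw [add_sub_cancel_right] at hz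
    obtain ⟨w, hw, hwv⟩ := ih hf.of_succ (by omega)
      (Submodule.sub_mem _ hv (Submodule.smul_mem _ _ hz)) (koszulDiff_sub_smul_mem huv hzu)
    exact ⟨w, hw, sub_mem_initialIdeal_succ (u := z) fun i => by
      rw [sub_right_comm]; exact hwv i⟩

/-- The iterated connecting map `H^{d-m}(g; A/(f₀, …, f_{m-1})) → H^d(g; A) = A/(g)`, as a relation:
`(v, t)` belongs to it if there are cochains `v = v_m, v_{m-1}, …, v₀` with `v_j` of degree `d - j`,
`D v_{j+1} ≡ f_j v_j` modulo `(f₀, …, f_{j-1})`, and `t` the coefficient of `v₀`. -/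
def zigzag (f g : ℕ → A) (d : ℕ) : ℕ → Submodule A ((KoszulIndex d → A) × A)
  | 0 =>
    { carrier := {x | x.1 ∈ koszulCochains A d d ∧ x.1 (top d) = x.2}
      add_mem' := fun hx hy => ⟨Submodule.add_mem _ hx.1 hy.1, congrArg₂ (· + ·) hx.2 hy.2⟩
      zero_mem' := ⟨Submodule.zero_mem _, rfl⟩
      smul_mem' := fun c _ hx => ⟨Submodule.smul_mem _ c hx.1, congrArg (c * ·) hx.2⟩ }
  | m + 1 =>
    { carrier := {x | x.1 ∈ koszulCochains A d (d - (m + 1)) ∧ ∃ u, (u, x.2) ∈ zigzag f g d m ∧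
        ∀ i, (koszulDiff g d x.1 - f m • u) i ∈ initialIdeal f m}
      add_mem' := by
        rintro x y ⟨hx, u, hu, hxu⟩ ⟨hy, w, hw, hyw⟩
        refine ⟨Submodule.add_mem _ hx hy, u + w, Submodule.add_mem _ hu hw, fun i => ?_⟩
        rw [Prod.fst_add, map_add, smul_add, add_sub_add_comm]
        exact Ideal.add_mem _ (hxu i) (hyw i)
      zero_mem' := ⟨Submodule.zero_mem _, 0, Submodule.zero_mem _, fun i => by simp⟩
      smul_mem' := by
        rintro c x ⟨hx, u, hu, hxu⟩
        refine ⟨Submodule.smul_mem _ c hx, c • u, Submodule.smul_mem _ c hu, fun i => ?_⟩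
        rw [Prod.smul_fst, map_smul, smul_comm, ← smul_sub]
        exact Ideal.mul_mem_left _ c (hxu i) }

variable {t : A}

lemma mem_zigzag_zero : (v, t) ∈ zigzag f g d 0 ↔ v ∈ koszulCochains A d d ∧ v (top d) = t :=
  Iff.rfl

lemma mem_zigzag_succ : (v, t) ∈ zigzag f g d (m + 1) ↔
    v ∈ koszulCochains A d (d - (m + 1)) ∧
      ∃ u, (u, t) ∈ zigzag f g d m ∧ ∀ i, (koszulDiff g d v - f m • u) i ∈ initialIdeal f m :=
  Iff.rfl

lemma mem_koszulCochains_of_mem_zigzag (h : (v, t) ∈ zigzag f g d m) :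
    v ∈ koszulCochains A d (d - m) := by
  cases m with
  | zero => simpa using (mem_zigzag_zero.1 h).1
  | succ m => exact_mod_cast (mem_zigzag_succ.1 h).1

lemma exists_mem_zigzag_of_cocycle (hf : IsWeaklyRegularUpTo f m)
    (hv : v ∈ koszulCochains A d (d - m)) (hDv : ∀ i, koszulDiff g d v i ∈ initialIdeal f m) :
    ∃ t, (v, t) ∈ zigzag f g d m := by
  induction m generalizing v with
  | zero => exact ⟨_, by simpa using hv, rfl⟩
  | succ m ih =>
    push_cast at hv
    obtain ⟨u, hu, huv⟩ :=
      exists_mem_koszulCochains_sub_smul_mem (koszulDiff_mem_koszulCochains hv) hDv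
    rw [← sub_sub, sub_add_cancel] at hu
    obtain ⟨t, ht⟩ := ih hf.of_succ hu
      (koszulDiff_mem_of_koszulDiff_sub_smul_mem hf huv)
    exact ⟨t, hv, u, ht, huv⟩

lemma mem_initialIdeal_of_coboundary (hf : IsWeaklyRegularUpTo f m) (h : (v, t) ∈ zigzag f g d m)
    {w : KoszulIndex d → A} (hw : ∀ i, (v - koszulDiff g d w) i ∈ initialIdeal f m)
    (hwC : w ∈ koszulCochains A d (d - m - 1)) : t ∈ initialIdeal g d := by
  induction m generalizing v w with
  | zero =>
    obtain ⟨-, rfl⟩ := mem_zigzag_zero.1 h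
    have hv := hw (top d)
    rw [initialIdeal_zero, Ideal.mem_bot, Pi.sub_apply, sub_eq_zero] at hv
    exact hv ▸ koszulDiff_top_mem w
  | succ m ih =>
    obtain ⟨hv, u, hu, huv⟩ := mem_zigzag_succ.1 h
    push_cast at hwC
    have hDw := koszulDiff_mem_koszulCochains (g := g) hwC
    rw [sub_add_cancel] at hDw
    obtain ⟨z, hz, hzv⟩ := exists_mem_koszulCochains_sub_smul_mem (Submodule.sub_mem _ hv hDw) hw
    refine ih hf.of_succ hu (w := z) (fun i => ?_) (by rwa [sub_sub])
    refine hf m m.lt_succ_self _ ?_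
    convert Ideal.sub_mem _ (koszulDiff_mem_ideal (g := g) hzv i) (huv i) using 1
    simp only [map_sub, koszulDiff_koszulDiff, map_smul, Pi.sub_apply, Pi.smul_apply,
      Pi.zero_apply, smul_eq_mul]
    ring

lemma exists_sub_koszulDiff_mem_of_mem_zigzag (hg : IsWeaklyRegularUpTo g d)
    (hf : IsWeaklyRegularUpTo f m) (h : (v, t) ∈ zigzag f g d m) (ht : t ∈ initialIdeal g d) :
    ∃ w ∈ koszulCochains A d (d - m - 1), ∀ i, (v - koszulDiff g d w) i ∈ initialIdeal f m := by
  induction m generalizing v with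
  | zero =>
    obtain ⟨hv, rfl⟩ := mem_zigzag_zero.1 h
    obtain ⟨w, hw, hwt⟩ := exists_koszulDiff_top_eq ht
    have hDw := koszulDiff_mem_koszulCochains (g := g) hw
    rw [sub_add_cancel] at hDw
    refine ⟨w, by simpa using hw, fun i => ?_⟩
    rw [eq_of_top_eq hv hDw hwt.symm, sub_self]
    exact Ideal.zero_mem _
  | succ m ih =>
    obtain ⟨hv, u, hu, huv⟩ := mem_zigzag_succ.1 h
    obtain ⟨z, hz, hzu⟩ := ih hf.of_succ hu
    rw [sub_sub] at hz
    obtain ⟨w, hw, hwv⟩ := exists_sub_koszulDiff_mem hg hf.of_succ (by omega)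
      (Submodule.sub_mem _ hv (Submodule.smul_mem _ (f m) hz)) (koszulDiff_sub_smul_mem huv hzu)
    refine ⟨w, by exact_mod_cast hw, sub_mem_initialIdeal_succ (u := z) fun i => ?_⟩
    rw [sub_right_comm]
    exact hwv i

lemma exists_mem_zigzag_of_mul_mem (hg : IsWeaklyRegularUpTo g d) (hf : IsWeaklyRegularUpTo f m)
    (ht : ∀ j < m, f j * t ∈ initialIdeal g d) : ∃ v, (v, t) ∈ zigzag f g d m := by
  induction m with
  | zero => exact ⟨constCochain d d t, constCochain_mem t, constCochain_top t⟩
  | succ m ih =>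
    obtain ⟨u, hu⟩ := ih hf.of_succ fun j hj => ht j (hj.trans m.lt_succ_self)
    obtain ⟨v, hv, hvu⟩ := exists_sub_koszulDiff_mem_of_mem_zigzag hg hf.of_succ
      (Submodule.smul_mem _ (f m) hu) (ht m m.lt_succ_self)
    refine ⟨v, by rwa [← sub_sub], u, hu, fun i => ?_⟩
    rw [← neg_mem_iff, ← Pi.neg_apply, neg_sub]
    exact hvu i

lemma koszulDiff_mem_of_mem_zigzag (h : (v, t) ∈ zigzag f g d m) (i : KoszulIndex d) :
    koszulDiff g d v i ∈ initialIdeal f m := by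
  cases m with
  | zero =>
    rw [eq_zero_of_mem_koszulCochains (koszulDiff_mem_koszulCochains h.1) (.inr (lt_add_one _))]
    exact Ideal.zero_mem _
  | succ m =>
    obtain ⟨-, u, -, huv⟩ := mem_zigzag_succ.1 h
    exact sub_mem_initialIdeal_succ huv i

lemma mul_mem_of_mem_zigzag (hf : IsWeaklyRegularUpTo f m) (h : (v, t) ∈ zigzag f g d m) {j : ℕ}
    (hj : j < m) : f j * t ∈ initialIdeal g d := by
  induction m generalizing v with
  | zero => exact absurd hj j.not_lt_zero
  | succ m ih =>
    obtain ⟨hv, u, hu, huv⟩ := mem_zigzag_succ.1 h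
    rcases Nat.lt_succ_iff_lt_or_eq.1 hj with hj | rfl
    · exact ih hf.of_succ hu hj
    · refine mem_initialIdeal_of_coboundary hf.of_succ (Submodule.smul_mem _ (f j) hu) (w := v)
        (fun i => ?_) (by rwa [sub_sub])
      rw [← neg_mem_iff, ← Pi.neg_apply, neg_sub]
      exact huv i

lemma component_mem_zigzag {Γ : Type*} [AddCommGroup Γ] (π : Γ → A →+ A) {γ φ : ℕ → Γ}
    (hg : ∀ j < d, ∀ p a, π (p + γ j) (g j * a) = g j * π p a)
    (hf : ∀ j < m, ∀ p a, π (p + φ j) (f j * a) = f j * π p a)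
    (hJ : ∀ j < m, ∀ p, ∀ a ∈ initialIdeal f j, π p a ∈ initialIdeal f j)
    (h : (v, t) ∈ zigzag f g d m) (p : Γ) :
    ((fun i => π (p + weight γ i) (v i)),
      π (p + ∑ j ∈ Finset.range d, γ j - ∑ j ∈ Finset.range m, φ j) t) ∈ zigzag f g d m := by
  induction m generalizing v p with
  | zero =>
    obtain ⟨hv, rfl⟩ := mem_zigzag_zero.1 h
    exact ⟨fun i hi => by simp [hv i hi], by simp [weight_top]⟩
  | succ m ih =>
    obtain ⟨hv, u, hu, huv⟩ := mem_zigzag_succ.1 h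
    have hu' := ih (fun j hj => hf j (hj.trans m.lt_succ_self))
      (fun j hj => hJ j (hj.trans m.lt_succ_self)) hu (p - φ m)
    rw [sub_add_eq_add_sub, sub_sub, add_comm (φ m), ← Finset.sum_range_succ] at hu'
    refine ⟨fun i hi => by simp [hv i hi], _, hu', fun i => ?_⟩
    have hπ := hJ m m.lt_succ_self (p + weight γ i) _ (huv i)
    have hp : p + weight γ i = p - φ m + weight γ i + φ m := by abel
    rw [Pi.sub_apply, ← koszulDiff_component π hg]
    rw [Pi.sub_apply, map_sub] at hπ
    convert hπ using 2
    rw [Pi.smul_apply, Pi.smul_apply, smul_eq_mul, smul_eq_mul, hp, hf m m.lt_succ_self]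

end Zigzag

section Linkage

open KoszulIndex

variable {d} {A : Type*} [CommRing A] {f g : ℕ → A} {s t : A}

/-- The linkage between `A/(f)` and `A/(g)` for two sequences of length `d`: the iterated connecting
map of the Koszul cohomology of `g`, read on `H⁰(g; A/(f))`, as a relation between representatives
`s` and `t`. -/
def linkage (f g : ℕ → A) (d : ℕ) : Submodule A (A × A) :=
  (zigzag f g d d).map ((LinearMap.proj (bot d)).prodMap LinearMap.id)

lemma mem_linkage : (s, t) ∈ linkage f g d ↔ ∃ v, (v, t) ∈ zigzag f g d d ∧ v (bot d) = s := by
  simp [linkage]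

lemma mem_koszulCochains_of_mem_zigzag_self {v : KoszulIndex d → A}
    (h : (v, t) ∈ zigzag f g d d) : v ∈ koszulCochains A d 0 :=
  sub_self (d : ℤ) ▸ mem_koszulCochains_of_mem_zigzag h

lemma exists_mem_linkage_right_iff (hf : IsWeaklyRegularUpTo f d) :
    (∃ t, (s, t) ∈ linkage f g d) ↔ ∀ j < d, g j * s ∈ initialIdeal f d := by
  constructor
  · rintro ⟨t, h⟩
    obtain ⟨v, hv, rfl⟩ := mem_linkage.1 h
    exact (koszulDiff_mem_ideal_iff_of_degree_zero (mem_koszulCochains_of_mem_zigzag_self hv)).1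
      (koszulDiff_mem_of_mem_zigzag hv)
  · intro hs
    obtain ⟨t, ht⟩ := exists_mem_zigzag_of_cocycle hf (v := constCochain d 0 s)
      ((sub_self (d : ℤ)).symm ▸ constCochain_mem s)
      ((koszulDiff_mem_ideal_iff_of_degree_zero (constCochain_mem s)).2
        (by rwa [constCochain_zero_bot]))
    exact ⟨t, mem_linkage.2 ⟨_, ht, constCochain_zero_bot s⟩⟩

lemma exists_mem_linkage_left_iff (hg : IsWeaklyRegularUpTo g d) (hf : IsWeaklyRegularUpTo f d) :
    (∃ s, (s, t) ∈ linkage f g d) ↔ ∀ j < d, f j * t ∈ initialIdeal g d := by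
  constructor
  · rintro ⟨s, h⟩ j hj
    obtain ⟨v, hv, -⟩ := mem_linkage.1 h
    exact mul_mem_of_mem_zigzag hf hv hj
  · intro ht
    obtain ⟨v, hv⟩ := exists_mem_zigzag_of_mul_mem hg hf ht
    exact ⟨_, mem_linkage.2 ⟨v, hv, rfl⟩⟩

lemma mem_initialIdeal_iff_of_mem_linkage (hg : IsWeaklyRegularUpTo g d)
    (hf : IsWeaklyRegularUpTo f d) (h : (s, t) ∈ linkage f g d) :
    s ∈ initialIdeal f d ↔ t ∈ initialIdeal g d := by
  obtain ⟨v, hv, rfl⟩ := mem_linkage.1 h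
  have hvC := mem_koszulCochains_of_mem_zigzag_self hv
  constructor
  · intro hs
    refine mem_initialIdeal_of_coboundary hf hv (w := 0) (fun i => ?_) (Submodule.zero_mem _)
    rw [map_zero, sub_zero]
    exact mem_ideal_of_bot_mem hvC hs i
  · intro ht
    obtain ⟨w, hw, hwv⟩ := exists_sub_koszulDiff_mem_of_mem_zigzag hg hf hv ht
    have hw0 : w = 0 := eq_zero_of_mem_koszulCochains hw (.inl (by simp))
    simpa [hw0] using hwv (bot d)

lemma component_mem_linkage {Γ σ : Type*} [AddCommGroup Γ] [DecidableEq Γ] [SetLike σ A]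
    [AddSubgroupClass σ A] (𝒜 : Γ → σ) [GradedRing 𝒜] {γ φ : ℕ → Γ} (hg : ∀ j < d, g j ∈ 𝒜 (γ j))
    (hf : ∀ j < d, f j ∈ 𝒜 (φ j)) (h : (s, t) ∈ linkage f g d) (p : Γ) :
    (GradedRing.proj 𝒜 p s,
      GradedRing.proj 𝒜 (p + ∑ j ∈ Finset.range d, γ j - ∑ j ∈ Finset.range d, φ j) t) ∈
        linkage f g d := by
  have hmul {b : A} {r : Γ} (hb : b ∈ 𝒜 r) (p : Γ) (a : A) :
      GradedRing.proj 𝒜 (p + r) (b * a) = b * GradedRing.proj 𝒜 p a := by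
    rw [add_comm]
    exact DirectSum.coe_decompose_mul_add_of_left_mem 𝒜 hb
  have hJ (j : ℕ) (hj : j < d) (p : Γ) (a : A) (ha : a ∈ initialIdeal f j) :
      GradedRing.proj 𝒜 p a ∈ initialIdeal f j := by
    refine Ideal.homogeneous_span 𝒜 _ ?_ p ha
    rintro - ⟨i, hi, rfl⟩
    exact ⟨_, hf i (hi.trans hj)⟩
  obtain ⟨v, hv, rfl⟩ := mem_linkage.1 h
  refine mem_linkage.2 ⟨_, component_mem_zigzag (GradedRing.proj 𝒜) (fun j hj => hmul (hg j hj))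
    (fun j hj => hmul (hf j hj)) hJ hv p, ?_⟩
  rw [weight_bot, add_zero]

end Linkage

section TorsionEquiv

variable {A : Type*} [CommRing A]

lemma exists_linearEquiv_of_rel {M M' N N' : Type*} [AddCommGroup M] [Module A M]
    [AddCommGroup M'] [Module A M'] [AddCommGroup N] [Module A N] [AddCommGroup N'] [Module A N']
    {π : M →ₗ[A] M'} {ρ : N →ₗ[A] N'} (hπ : Function.Surjective π) (hρ : Function.Surjective ρ)
    {G : Submodule A (M × N)} {P : Submodule A M'} {Q : Submodule A N'}
    (hP : ∀ x, π x ∈ P ↔ ∃ y, (x, y) ∈ G) (hQ : ∀ y, ρ y ∈ Q ↔ ∃ x, (x, y) ∈ G)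
    (hzero : ∀ x y, (x, y) ∈ G → (π x = 0 ↔ ρ y = 0)) :
    ∃ e : P ≃ₗ[A] Q, ∀ x y (p : P), (x, y) ∈ G → (π x = p ↔ ρ y = e p) := by
  let G' : Submodule A (P × Q) :=
    (G.map (π.prodMap ρ)).comap (P.subtype.prodMap Q.subtype)
  have mem_G' {x y} (h : (x, y) ∈ G) :
      ((⟨π x, (hP x).2 ⟨y, h⟩⟩, ⟨ρ y, (hQ y).2 ⟨x, h⟩⟩) : P × Q) ∈ G' := ⟨(x, y), h, rfl⟩
  have hzero' (z : G') : z.1.1 = 0 ↔ z.1.2 = 0 := by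
    obtain ⟨⟨⟨p, hp⟩, ⟨q, hq⟩⟩, ⟨x, y⟩, h, hz⟩ := z
    obtain ⟨rfl, rfl⟩ := Prod.mk.inj hz
    exact (Submodule.mk_eq_zero _ _).trans ((hzero x y h).trans (Submodule.mk_eq_zero _ _).symm)
  have hfst : Function.Bijective (Prod.fst ∘ G'.subtype) := by
    constructor
    · exact (injective_iff_map_eq_zero (LinearMap.fst A P Q ∘ₗ G'.subtype)).2 fun z hz =>
        Subtype.ext (Prod.ext hz ((hzero' z).1 hz))
    · rintro ⟨p, hp⟩
      obtain ⟨x, rfl⟩ := hπ p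
      obtain ⟨y, h⟩ := (hP x).1 hp
      exact ⟨⟨_, mem_G' h⟩, rfl⟩
  have hsnd : Function.Bijective (Prod.snd ∘ G'.subtype) := by
    constructor
    · exact (injective_iff_map_eq_zero (LinearMap.snd A P Q ∘ₗ G'.subtype)).2 fun z hz =>
        Subtype.ext (Prod.ext ((hzero' z).2 hz) hz)
    · rintro ⟨q, hq⟩
      obtain ⟨y, rfl⟩ := hρ q
      obtain ⟨x, h⟩ := (hQ y).1 hq
      exact ⟨⟨_, mem_G' h⟩, rfl⟩
  obtain ⟨e, he⟩ := Submodule.exists_equiv_eq_graph hfst hsnd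
  refine ⟨e, fun x y p h => ?_⟩
  have hxy := mem_G' h
  rw [he, LinearMap.mem_graph_iff] at hxy
  calc π x = p ↔ ⟨π x, (hP x).2 ⟨y, h⟩⟩ = p := by rw [Subtype.ext_iff]
    _ ↔ e ⟨π x, (hP x).2 ⟨y, h⟩⟩ = e p := e.injective.eq_iff.symm
    _ ↔ ρ y = e p := by rw [← LinearEquiv.coe_coe, ← hxy, Subtype.ext_iff]

lemma mk_mem_torsionBySet_initialIdeal {I : Ideal A} {g : ℕ → A} {d : ℕ} {s : A} :
    Ideal.Quotient.mk I s ∈ Submodule.torsionBySet A (A ⧸ I) (initialIdeal g d) ↔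
      ∀ j < d, g j * s ∈ I := by
  rw [initialIdeal, ← Ideal.submodule_span_eq, ← Submodule.torsionBySet_eq_torsionBySet_span]
  simp [← Ideal.Quotient.eq_zero_iff_mem, Algebra.smul_def]

lemma exists_torsionBySet_equiv_of_linkage {f g : ℕ → A} {d : ℕ} (hf : IsWeaklyRegularUpTo f d)
    (hg : IsWeaklyRegularUpTo g d) :
    ∃ e : Submodule.torsionBySet A (A ⧸ initialIdeal f d) (initialIdeal g d) ≃ₗ[A]
        Submodule.torsionBySet A (A ⧸ initialIdeal g d) (initialIdeal f d),
      ∀ s t x, (s, t) ∈ linkage f g d →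
        (Ideal.Quotient.mk (initialIdeal f d) s = x.1 ↔
          Ideal.Quotient.mk (initialIdeal g d) t = (e x).1) :=
  exists_linearEquiv_of_rel (π := (initialIdeal f d).mkQ) (ρ := (initialIdeal g d).mkQ)
    (Submodule.mkQ_surjective _) (Submodule.mkQ_surjective _)
    (fun _ => mk_mem_torsionBySet_initialIdeal.trans (exists_mem_linkage_right_iff hf).symm)
    (fun _ => mk_mem_torsionBySet_initialIdeal.trans (exists_mem_linkage_left_iff hg hf).symm)
    fun _ _ h => Ideal.Quotient.eq_zero_iff_mem.trans
      ((mem_initialIdeal_iff_of_mem_linkage hg hf h).trans Ideal.Quotient.eq_zero_iff_mem.symm)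

theorem exists_torsionBySet_initialIdeal_equiv {Γ σ : Type*} [AddCommGroup Γ] [DecidableEq Γ]
    [SetLike σ A] [AddSubgroupClass σ A] (𝒜 : Γ → σ) [GradedRing 𝒜] {f g : ℕ → A} {φ γ : ℕ → Γ}
    {d : ℕ} (hf : IsWeaklyRegularUpTo f d) (hg : IsWeaklyRegularUpTo g d)
    (hfφ : ∀ j < d, f j ∈ 𝒜 (φ j)) (hgγ : ∀ j < d, g j ∈ 𝒜 (γ j)) :
    ∃ e : Submodule.torsionBySet A (A ⧸ initialIdeal f d) (initialIdeal g d) ≃ₗ[A]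
        Submodule.torsionBySet A (A ⧸ initialIdeal g d) (initialIdeal f d),
      ∀ p x, (∃ a ∈ 𝒜 p, Ideal.Quotient.mk (initialIdeal f d) a = x.1) ↔
        ∃ a ∈ 𝒜 (p + ∑ j ∈ Finset.range d, γ j - ∑ j ∈ Finset.range d, φ j),
          Ideal.Quotient.mk (initialIdeal g d) a = (e x).1 := by
  obtain ⟨e, he⟩ := exists_torsionBySet_equiv_of_linkage hf hg
  refine ⟨e, fun p x => ⟨?_, ?_⟩⟩
  · rintro ⟨a, ha, hax⟩
    obtain ⟨t, ht⟩ := (exists_mem_linkage_right_iff hf).2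
      (mk_mem_torsionBySet_initialIdeal.1 (hax ▸ x.2))
    have hat := component_mem_linkage 𝒜 hgγ hfφ ht p
    rw [GradedRing.proj_apply, DirectSum.decompose_of_mem_same 𝒜 ha] at hat
    exact ⟨_, SetLike.coe_mem _, (he _ _ x hat).1 hax⟩
  · rintro ⟨b, hb, hbx⟩
    obtain ⟨s, hs⟩ := (exists_mem_linkage_left_iff hg hf).2
      (mk_mem_torsionBySet_initialIdeal.1 (hbx ▸ (e x).2))
    have hsb := component_mem_linkage 𝒜 hgγ hfφ hs p
    rw [GradedRing.proj_apply 𝒜 _ b, DirectSum.decompose_of_mem_same 𝒜 hb] at hsb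
    exact ⟨_, SetLike.coe_mem _, (he _ _ x hsb).2 hbx⟩

lemma torsionBySet_le_of_equiv {M P : Type*} [AddCommGroup M] [Module A M]
    [AddCommGroup P] [Module A P] {J K : Set A}
    (e : Submodule.torsionBySet A M J ≃ₗ[A] Submodule.torsionBySet A P J)
    (h : Submodule.torsionBySet A M J ≤ Submodule.torsionBySet A M K) :
    Submodule.torsionBySet A P J ≤ Submodule.torsionBySet A P K := by
  intro y hy
  refine (Submodule.mem_torsionBySet_iff _ _).2 fun c => ?_
  have hc : c.1 • e.symm ⟨y, hy⟩ = 0 :=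
    Subtype.ext ((Submodule.mem_torsionBySet_iff _ _).1 (h (e.symm ⟨y, hy⟩).2) c)
  rw [← map_smul, LinearEquiv.map_eq_zero_iff] at hc
  exact congrArg Subtype.val hc

variable {d} {f g : Fin d → A}

lemma initialIdeal_extend (f : Fin d → A) (i : Fin d) :
    initialIdeal (Function.extend Fin.val f 0) i = Ideal.span (f '' Set.Iio i) := by
  rw [initialIdeal, ← Fin.image_val_Iio, Set.image_image]
  simp only [Fin.val_injective.extend_apply]

lemma initialIdeal_extend_length (f : Fin d → A) :
    initialIdeal (Function.extend Fin.val f 0) d = Ideal.span (Set.range f) := by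
  rw [initialIdeal, ← Fin.range_val, ← Set.range_comp, Function.extend_comp Fin.val_injective]

lemma isWeaklyRegular_ofFn_iff :
    RingTheory.Sequence.IsWeaklyRegular A (List.ofFn f) ↔
      ∀ i b, f i * b ∈ Ideal.span (f '' Set.Iio i) → b ∈ Ideal.span (f '' Set.Iio i) := by
  have htake (i : Fin d) : Ideal.ofList ((List.ofFn f).take i) = Ideal.span (f '' Set.Iio i) := by
    rw [Ideal.ofList]
    congr 1
    ext r
    simp only [List.mem_take_iff_getElem, List.getElem_ofFn, Set.mem_image, Set.mem_Iio,
      List.length_ofFn, Set.mem_ofPred_eq]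
    constructor
    · rintro ⟨j, hj, rfl⟩
      exact ⟨_, (lt_min_iff.1 hj).1, rfl⟩
    · rintro ⟨j, hj, rfl⟩
      exact ⟨j, lt_min hj j.2, rfl⟩
  rw [RingTheory.Sequence.isWeaklyRegular_iff, Fin.forall_iff]
  simp only [List.length_ofFn]
  refine forall₂_congr fun i hi => ?_
  rw [List.getElem_ofFn, smul_eq_mul, Ideal.mul_top, htake ⟨i, hi⟩,
    isSMulRegular_on_quot_iff_lsmul_comap_le]
  rfl

lemma isWeaklyRegularUpTo_extend (hf : RingTheory.Sequence.IsWeaklyRegular A (List.ofFn f)) :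
    IsWeaklyRegularUpTo (Function.extend Fin.val f 0) d := by
  intro i hi b hb
  lift i to Fin d using hi
  rw [initialIdeal_extend] at hb ⊢
  rw [Fin.val_injective.extend_apply] at hb
  exact isWeaklyRegular_ofFn_iff.1 hf i b hb

theorem exists_torsionBySet_quotient_equiv {Γ σ : Type*} [AddCommGroup Γ] [DecidableEq Γ]
    [SetLike σ A] [AddSubgroupClass σ A] (𝒜 : Γ → σ) [GradedRing 𝒜] {φ γ : Fin d → Γ}
    (hf : RingTheory.Sequence.IsWeaklyRegular A (List.ofFn f))
    (hg : RingTheory.Sequence.IsWeaklyRegular A (List.ofFn g))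
    (hfφ : ∀ i, f i ∈ 𝒜 (φ i)) (hgγ : ∀ i, g i ∈ 𝒜 (γ i)) :
    ∃ e : Submodule.torsionBySet A (A ⧸ Ideal.span (Set.range f)) (Ideal.span (Set.range g)) ≃ₗ[A]
        Submodule.torsionBySet A (A ⧸ Ideal.span (Set.range g)) (Ideal.span (Set.range f)),
      ∀ p x, (∃ a ∈ 𝒜 p, Ideal.Quotient.mk (Ideal.span (Set.range f)) a = x.1) ↔
        ∃ a ∈ 𝒜 (p + ∑ i, γ i - ∑ i, φ i),
          Ideal.Quotient.mk (Ideal.span (Set.range g)) a = (e x).1 := by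
  have hext {h : Fin d → A} {ψ : Fin d → Γ} (hh : ∀ i, h i ∈ 𝒜 (ψ i)) (j : ℕ) (hj : j < d) :
      Function.extend Fin.val h 0 j ∈ 𝒜 (Function.extend Fin.val ψ 0 j) := by
    lift j to Fin d using hj
    simpa only [Fin.val_injective.extend_apply] using hh j
  have key := exists_torsionBySet_initialIdeal_equiv 𝒜 (isWeaklyRegularUpTo_extend hf)
    (isWeaklyRegularUpTo_extend hg) (hext hfφ) (hext hgγ)
  rw [initialIdeal_extend_length f, initialIdeal_extend_length g] at key
  simpa only [Finset.sum_range, Fin.val_injective.extend_apply] using key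

end TorsionEquiv

section XPowers

lemma mem_span_X_pow_image {R σ ι : Type*} [CommSemiring R] {v : ι → σ} {M : ℕ} {s : Set ι}
    {p : MvPolynomial σ R} :
    p ∈ Ideal.span ((fun i => X (v i) ^ M) '' s) ↔ ∀ c ∈ p.support, ∃ i ∈ s, M ≤ c (v i) := by
  have himage : (fun i => X (v i) ^ M : ι → MvPolynomial σ R) '' s =
      (fun c => monomial c 1) '' ((fun i => Finsupp.single (v i) M) '' s) := by
    simp only [Set.image_image, X_pow_eq_monomial]
  rw [himage, mem_ideal_span_monomial_image]
  simp only [Set.exists_mem_image, Finsupp.single_le_iff]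

lemma isWeaklyRegular_X_pow {R σ : Type*} [CommRing R] {d : ℕ} {v : Fin d → σ}
    (hv : Function.Injective v) (M : ℕ) :
    RingTheory.Sequence.IsWeaklyRegular (MvPolynomial σ R)
      (List.ofFn fun i => (X (v i) ^ M : MvPolynomial σ R)) := by
  refine isWeaklyRegular_ofFn_iff.2 fun i b hb => mem_span_X_pow_image.2 fun c hc => ?_
  rw [X_pow_eq_monomial] at hb
  have hc' : Finsupp.single (v i) M + c ∈ (monomial (Finsupp.single (v i) M) 1 * b).support := by
    rwa [mem_support_iff, coeff_monomial_mul, one_mul, ← mem_support_iff]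
  obtain ⟨j, hj, hjc⟩ := mem_span_X_pow_image.1 hb _ hc'
  refine ⟨j, hj, ?_⟩
  rwa [Finsupp.add_apply, Finsupp.single_eq_of_ne (hv.ne hj.ne), zero_add] at hjc

end XPowers

section XCoefficients

variable {k d n}

/-- `B` as the ring of polynomials in `x_1,…,x_d` over `T`. -/
def xEquiv : B k d n ≃ₐ[T k n] MvPolynomial (Fin d) (T k n) :=
  AlgEquiv.ofRingEquiv (f := (sumAlgEquiv k (Fin d) (Fin n)).toRingEquiv)
    (DFunLike.congr_fun (sumAlgEquiv_comp_rename_inr k (Fin d) (Fin n)))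

/-- The basis of monomials `x^a` of `B` over `T`. -/
def xBasis : Module.Basis (Fin d →₀ ℕ) (T k n) (B k d n) :=
  (basisMonomials (Fin d) (T k n)).map xEquiv.symm.toLinearEquiv

/-- The coefficient of `x^a`, an element of `T`. -/
def xCoeff (a : Fin d →₀ ℕ) : B k d n →ₗ[T k n] T k n := xBasis.coord a

lemma xCoeff_apply (a : Fin d →₀ ℕ) (b : B k d n) : xCoeff a b = coeff a (xEquiv b) := rfl

lemma xEquiv_xBasis (a : Fin d →₀ ℕ) : xEquiv (xBasis a : B k d n) = monomial a 1 := by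
  simp [xBasis]

lemma xCoeff_xBasis_self (a : Fin d →₀ ℕ) : xCoeff a (xBasis a : B k d n) = 1 := by
  rw [xCoeff_apply, xEquiv_xBasis, coeff_monomial, if_pos rfl]

lemma xCoeff_xBasis_of_ne {a a' : Fin d →₀ ℕ} (h : a' ≠ a) :
    xCoeff a (xBasis a' : B k d n) = 0 := by
  rw [xCoeff_apply, xEquiv_xBasis, coeff_monomial, if_neg h]

lemma xCoeff_add_mul_xBasis (a a' : Fin d →₀ ℕ) (b : B k d n) :
    xCoeff (a + a') (b * xBasis a') = xCoeff a b := by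
  rw [xCoeff_apply, map_mul, xEquiv_xBasis, coeff_mul_monomial, mul_one, xCoeff_apply]

lemma xEquiv_monomial_sumElim (a : Fin d →₀ ℕ) (e : Fin n →₀ ℕ) (r : k) :
    xEquiv (monomial (Finsupp.sumElim a e) r : B k d n) = monomial a (monomial e r) := by
  have hinl : xEquiv (rename Sum.inl (monomial a 1) : B k d n) = monomial a 1 :=
    (DFunLike.congr_fun (sumAlgEquiv_comp_rename_inl k (Fin d) (Fin n)) _).trans (by simp)
  have hinr : xEquiv (rename Sum.inr (monomial e r) : B k d n) = C (monomial e r) :=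
    DFunLike.congr_fun (sumAlgEquiv_comp_rename_inr k (Fin d) (Fin n)) _
  calc xEquiv (monomial (Finsupp.sumElim a e) r : B k d n)
      = xEquiv (rename Sum.inr (monomial e r) * rename Sum.inl (monomial a 1)) := by
        rw [rename_monomial, rename_monomial, monomial_mul, mul_one, add_comm,
          Finsupp.sumElim_eq_add]
    _ = monomial a (monomial e r) := by rw [map_mul, hinl, hinr, C_mul_monomial, mul_one]

lemma coeff_xCoeff (a : Fin d →₀ ℕ) (e : Fin n →₀ ℕ) (b : B k d n) :
    coeff e (xCoeff a b) = coeff (Finsupp.sumElim a e) b := by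
  classical
  induction b using MvPolynomial.induction_on' with
  | add p q hp hq => rw [map_add, coeff_add, coeff_add, hp, hq]
  | monomial u r =>
    obtain ⟨⟨a', e'⟩, rfl⟩ := Finsupp.sumFinsuppEquivProdFinsupp.symm.surjective u
    have hinj : Finsupp.sumElim a' e' = Finsupp.sumElim a e ↔ a' = a ∧ e' = e :=
      Finsupp.sumFinsuppEquivProdFinsupp.symm.injective.eq_iff.trans Prod.mk_inj
    change coeff e (xCoeff a (monomial (Finsupp.sumElim a' e') r)) =
      coeff _ (monomial (Finsupp.sumElim a' e') r)
    rw [xCoeff_apply, xEquiv_monomial_sumElim]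
    simp only [coeff_monomial, hinj, ite_and, apply_ite (coeff e), coeff_zero]

/-- The exponent `(N,…,N)`. -/
def constExponent (d N : ℕ) : Fin d →₀ ℕ := Finsupp.equivFunOnFinite.symm fun _ => N

lemma degree_constExponent (d N : ℕ) : (constExponent d N).degree = d * N := by
  simp [constExponent, Finsupp.degree_eq_sum]

/-- The ideal `(x_1^{N+1},…,x_d^{N+1})` of `B`. -/
def xPowIdeal (k : Type) [Field k] (d n N : ℕ) : Ideal (B k d n) :=
  Ideal.span (Set.range fun i : Fin d => (X (Sum.inl i) ^ (N + 1) : B k d n))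

lemma mem_xPowIdeal_iff {N : ℕ} {b : B k d n} :
    b ∈ xPowIdeal k d n N ↔ ∀ a ≤ constExponent d N, xCoeff a b = 0 := by
  rw [xPowIdeal, ← Set.image_univ, mem_span_X_pow_image]
  constructor
  · intro h a ha
    ext e
    rw [coeff_xCoeff, coeff_zero]
    by_contra hc
    obtain ⟨i, -, hi⟩ := h _ (mem_support_iff.2 hc)
    exact Nat.not_succ_le_self N (hi.trans (ha i))
  · intro h c hc
    obtain ⟨⟨a, e⟩, rfl⟩ := Finsupp.sumFinsuppEquivProdFinsupp.symm.surjective c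
    by_contra! hlt
    apply mem_support_iff.1 hc
    change coeff (Finsupp.sumElim a e) b = 0
    rw [← coeff_xCoeff, h a fun i => Nat.lt_succ_iff.1 (hlt i trivial), coeff_zero]

end XCoefficients

section Residue

variable {k d n}

/-- The residue of `b` with respect to `x_1^{N+1},…,x_d^{N+1}`: the coefficient of the socle
generator `x_1^N ⋯ x_d^N`. -/
def residue (N : ℕ) : B k d n →ₗ[T k n] T k n := xCoeff (constExponent d N)

lemma residue_mul_xBasis {N : ℕ} {a : Fin d →₀ ℕ} (ha : a ≤ constExponent d N) (b : B k d n) :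
    residue N (b * xBasis (constExponent d N - a)) = xCoeff a b := by
  rw [residue, ← xCoeff_add_mul_xBasis a (constExponent d N - a), add_tsub_cancel_of_le ha]

lemma mem_xPowIdeal_iff_residue {N : ℕ} {t : B k d n} :
    t ∈ xPowIdeal k d n N ↔ ∀ b, residue N (t * b) = 0 :=
  ⟨fun ht b => mem_xPowIdeal_iff.1 (Ideal.mul_mem_right b _ ht) _ le_rfl,
    fun h => mem_xPowIdeal_iff.2 fun _ ha => (residue_mul_xBasis ha t).symm.trans (h _)⟩

/-- The element of `B` representing a functional `ψ` that vanishes on `(x_1^{N+1},…,x_d^{N+1})`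
through the residue pairing. -/
def residueDual (N : ℕ) (ψ : B k d n →ₗ[T k n] T k n) : B k d n :=
  ∑ a ∈ Finset.Iic (constExponent d N), ψ (xBasis (constExponent d N - a)) • xBasis a

lemma xCoeff_residueDual {N : ℕ} (ψ : B k d n →ₗ[T k n] T k n) (a : Fin d →₀ ℕ) :
    xCoeff a (residueDual N ψ) =
      if a ≤ constExponent d N then ψ (xBasis (constExponent d N - a)) else 0 := by
  classical
  simp only [residueDual, map_sum, map_smul, xCoeff, Module.Basis.coord_apply,
    Module.Basis.repr_self, Finsupp.single_apply, smul_eq_mul, mul_ite, mul_one, mul_zero,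
    Finset.sum_ite_eq', Finset.mem_Iic]

lemma residue_residueDual_mul {N : ℕ} {ψ : B k d n →ₗ[T k n] T k n}
    (hψ : ∀ b ∈ xPowIdeal k d n N, ψ b = 0) (b : B k d n) :
    residue N (residueDual N ψ * b) = ψ b := by
  suffices residue N ∘ₗ LinearMap.mulLeft (T k n) (residueDual N ψ) = ψ from
    DFunLike.congr_fun this b
  refine Module.Basis.ext (xBasis (k := k)) fun a => ?_
  rw [LinearMap.comp_apply, LinearMap.mulLeft_apply]
  by_cases ha : a ≤ constExponent d N
  · obtain ⟨a', ha'⟩ := exists_add_of_le ha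
    have hsub : constExponent d N - a' = a := by rw [ha', add_tsub_cancel_right]
    have hle : a' ≤ constExponent d N := ha' ▸ le_add_self
    rw [← hsub, residue_mul_xBasis hle, xCoeff_residueDual, if_pos hle]
  · have hmem : (xBasis a : B k d n) ∈ xPowIdeal k d n N :=
      mem_xPowIdeal_iff.2 fun a' ha' => xCoeff_xBasis_of_ne fun h => ha (h ▸ ha')
    rw [hψ _ hmem]
    exact mem_xPowIdeal_iff.1 (Ideal.mul_mem_left _ _ hmem) _ le_rfl

end Residue

section Bigrading

lemma weight_addMonoidHom_comp {σ M M' : Type*} [AddCommMonoid M] [AddCommMonoid M'] (φ : M →+ M')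
    (w : σ → M) (c : σ →₀ ℕ) : Finsupp.weight (φ ∘ w) c = φ (Finsupp.weight w c) := by
  simp only [Finsupp.weight_apply, map_finsuppSum, map_nsmul, Function.comp_apply]

lemma isWeightedHomogeneous_comp_of_addMonoidHom {R σ M M' : Type*} [CommSemiring R]
    [AddCommMonoid M] [AddCommMonoid M'] (φ : M →+ M') {w : σ → M} {p : MvPolynomial σ R} {m : M}
    (hp : IsWeightedHomogeneous w p m) : IsWeightedHomogeneous (φ ∘ w) p (φ m) :=
  fun c hc => (weight_addMonoidHom_comp φ w c).trans (congrArg φ (hp hc))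

variable {k d n}

lemma weight_bwt_sumElim (a : Fin d →₀ ℕ) (e : Fin n →₀ ℕ) :
    Finsupp.weight (bwt d n) (Finsupp.sumElim a e) = (a.degree, e.degree) := by
  ext <;> simp [Finsupp.weight_apply, Finsupp.sum_fintype, bwt, Finsupp.sumElim_apply,
    Finsupp.degree_eq_sum, Prod.fst_sum, Prod.snd_sum]

lemma mem_TcompZ_iff {j : ℤ} {t : T k n} :
    t ∈ TcompZ k n j ↔ ∀ e, coeff e t ≠ 0 → (e.degree : ℤ) = j := by
  rw [TcompZ]
  split_ifs with hj
  · lift j to ℕ using hj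
    simp only [mem_homogeneousSubmodule, IsHomogeneous, IsWeightedHomogeneous, Int.toNat_natCast,
      Nat.cast_inj, Finsupp.degree_eq_weight_one]
    rfl
  · rw [Submodule.mem_bot, MvPolynomial.ext_iff]
    refine forall_congr' fun e => ?_
    rw [coeff_zero, imp_iff_not (by omega), not_not]

/-- The bidegree of the variables, in `ℤ × ℤ`. -/
def intBwt (d n : ℕ) : Fin d ⊕ Fin n → ℤ × ℤ :=
  (Nat.castAddMonoidHom ℤ).prodMap (Nat.castAddMonoidHom ℤ) ∘ bwt d n

/-- The component of `B` of bidegree `p`, for `p` in the group `ℤ × ℤ`. -/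
abbrev bigrading (k : Type) [Field k] (d n : ℕ) (p : ℤ × ℤ) : Submodule k (B k d n) :=
  weightedHomogeneousSubmodule k (intBwt d n) p

lemma weight_intBwt_sumElim (a : Fin d →₀ ℕ) (e : Fin n →₀ ℕ) :
    Finsupp.weight (intBwt d n) (Finsupp.sumElim a e) = ((a.degree : ℤ), (e.degree : ℤ)) := by
  rw [intBwt, weight_addMonoidHom_comp, weight_bwt_sumElim]
  rfl

lemma mem_bigrading_iff {u v : ℤ} {b : B k d n} :
    b ∈ bigrading k d n (u, v) ↔
      ∀ a, xCoeff a b ∈ TcompZ k n v ∧ ((a.degree : ℤ) ≠ u → xCoeff a b = 0) := by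
  rw [mem_weightedHomogeneousSubmodule]
  constructor
  · intro hb a
    have hdeg (e : Fin n →₀ ℕ) (he : coeff e (xCoeff a b) ≠ 0) :
        (a.degree : ℤ) = u ∧ (e.degree : ℤ) = v := by
      rw [coeff_xCoeff] at he
      rw [← Prod.mk_inj, ← weight_intBwt_sumElim]
      exact hb he
    refine ⟨mem_TcompZ_iff.2 fun e he => (hdeg e he).2, fun ha => ?_⟩
    ext e
    by_contra he
    exact ha (hdeg e he).1
  · intro h c hc
    obtain ⟨⟨a, e⟩, rfl⟩ := Finsupp.sumFinsuppEquivProdFinsupp.symm.surjective c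
    replace hc : coeff e (xCoeff a b) ≠ 0 := (coeff_xCoeff a e b).trans_ne hc
    have ha : (a.degree : ℤ) = u := by
      by_contra ha
      exact hc (by rw [(h a).2 ha, coeff_zero])
    exact (weight_intBwt_sumElim a e).trans (Prod.ext ha (mem_TcompZ_iff.1 (h a).1 e hc))

lemma mem_bigrading_natCast_iff {p q : ℕ} {b : B k d n} :
    b ∈ bigrading k d n (p, q) ↔ b ∈ weightedHomogeneousSubmodule k (bwt d n) (p, q) := by
  have hinj : Function.Injective
      ((Nat.castAddMonoidHom ℤ).prodMap (Nat.castAddMonoidHom ℤ)) :=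
    Nat.cast_injective.prodMap Nat.cast_injective
  refine ⟨fun hb c hc => hinj ?_, isWeightedHomogeneous_comp_of_addMonoidHom _⟩
  rw [← weight_addMonoidHom_comp]
  exact hb hc

lemma xBasis_mem_bigrading (a : Fin d →₀ ℕ) : xBasis a ∈ bigrading k d n (a.degree, 0) := by
  refine mem_bigrading_iff.2 fun a' => ?_
  obtain rfl | h := eq_or_ne a a'
  · rw [xCoeff_xBasis_self]
    refine ⟨mem_TcompZ_iff.2 fun e he => ?_, fun h => (h rfl).elim⟩
    obtain rfl : 0 = e := by
      by_contra h
      exact he ((coeff_one e).trans (if_neg h))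
    rw [map_zero, Nat.cast_zero]
  · rw [xCoeff_xBasis_of_ne h]
    exact ⟨Submodule.zero_mem _, fun _ => rfl⟩

variable {I}

lemma mem_Scomp_iff {p q : ℕ} {s : B k d n ⧸ I} :
    s ∈ Scomp k d n I (p, q) ↔ ∃ b ∈ bigrading k d n (p, q), Ideal.Quotient.mk I b = s := by
  simp only [mem_bigrading_natCast_iff]
  rfl

end Bigrading

section ResidueDuality

variable {k d n I}

/-- A functional on `B` vanishing on `I`, as a functional on `B/I`. -/
def dualDesc (ψ : B k d n →ₗ[T k n] T k n) (hψ : ∀ b ∈ I, ψ b = 0) :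
    (B k d n ⧸ I) →ₗ[T k n] T k n :=
  (I.restrictScalars (T k n)).liftQ ψ hψ ∘ₗ
    (Submodule.Quotient.restrictScalarsEquiv (T k n) I).symm.toLinearMap

lemma dualDesc_mk (ψ : B k d n →ₗ[T k n] T k n) (hψ : ∀ b ∈ I, ψ b = 0) (b : B k d n) :
    dualDesc ψ hψ (Ideal.Quotient.mk I b) = ψ b := rfl

lemma dual_smul_mk (b c : B k d n) (φ : (B k d n ⧸ I) →ₗ[T k n] T k n) :
    (b • φ) (Ideal.Quotient.mk I c) = φ (Ideal.Quotient.mk I (b * c)) := by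
  rw [map_mul]
  rfl

/-- The functional `b ↦ φ (b mod I)` on `B`. -/
def dualInf (φ : (B k d n ⧸ I) →ₗ[T k n] T k n) : B k d n →ₗ[T k n] T k n :=
  φ ∘ₗ (Ideal.Quotient.mkₐ (T k n) I).toLinearMap

lemma mem_torsionBySet_dual_iff {J : Ideal (B k d n)} {φ : (B k d n ⧸ I) →ₗ[T k n] T k n} :
    φ ∈ Submodule.torsionBySet (B k d n) ((B k d n ⧸ I) →ₗ[T k n] T k n) J ↔
      ∀ g ∈ J, φ (Ideal.Quotient.mk I g) = 0 := by
  rw [Submodule.mem_torsionBySet_iff]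
  constructor
  · intro h g hg
    have := DFunLike.congr_fun (h ⟨g, hg⟩) (Ideal.Quotient.mk I 1)
    rwa [dual_smul_mk, mul_one] at this
  · rintro h ⟨g, hg⟩
    refine LinearMap.ext fun s => ?_
    obtain ⟨b, rfl⟩ := Ideal.Quotient.mk_surjective s
    exact (dual_smul_mk g b φ).trans (h _ (Ideal.mul_mem_right b _ hg))

lemma mk_mem_torsionBySet_iff {A : Type*} [CommRing A] {I J : Ideal A} {t : A} :
    Ideal.Quotient.mk J t ∈ Submodule.torsionBySet A (A ⧸ J) I ↔ ∀ b ∈ I, b * t ∈ J := by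
  simp only [Submodule.mem_torsionBySet_iff, SetLike.coe_sort_coe, Subtype.forall,
    ← Ideal.Quotient.eq_zero_iff_mem, map_mul]
  rfl

/-- The pairs `(t, φ)` for which the functional `φ` on `B/I` is induced by the residue pairing with
`t`. -/
def residueGraph (I : Ideal (B k d n)) (N : ℕ) :
    Submodule (B k d n) (B k d n × ((B k d n ⧸ I) →ₗ[T k n] T k n)) where
  carrier := {z | ∀ b, z.2 (Ideal.Quotient.mk I b) = residue N (z.1 * b)}
  zero_mem' b := by simp
  add_mem' {z z'} hz hz' b := by
    rw [Prod.snd_add, LinearMap.add_apply, hz b, hz' b, Prod.fst_add, add_mul, map_add]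
  smul_mem' c z hz b := by
    rw [Prod.smul_snd, dual_smul_mk, hz, Prod.smul_fst, smul_eq_mul, mul_left_comm, mul_assoc]

lemma mem_residueGraph {N : ℕ} {t : B k d n} {φ : (B k d n ⧸ I) →ₗ[T k n] T k n} :
    (t, φ) ∈ residueGraph I N ↔ ∀ b, φ (Ideal.Quotient.mk I b) = residue N (t * b) := Iff.rfl

lemma mem_xPowIdeal_iff_of_mem_residueGraph {N : ℕ} {t : B k d n}
    {φ : (B k d n ⧸ I) →ₗ[T k n] T k n} (h : (t, φ) ∈ residueGraph I N) :
    t ∈ xPowIdeal k d n N ↔ φ = 0 := by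
  rw [mem_xPowIdeal_iff_residue]
  simp only [← mem_residueGraph.1 h]
  rw [LinearMap.ext_iff, Ideal.Quotient.mk_surjective.forall]
  rfl

lemma mk_mem_torsionBySet_iff_exists_mem_residueGraph {N : ℕ} {t : B k d n} :
    Ideal.Quotient.mk (xPowIdeal k d n N) t ∈
        Submodule.torsionBySet (B k d n) (B k d n ⧸ xPowIdeal k d n N) I ↔
      ∃ φ, (t, φ) ∈ residueGraph I N := by
  rw [mk_mem_torsionBySet_iff]
  constructor
  · intro ht
    have hker : ∀ b ∈ I, (residue N ∘ₗ LinearMap.mulLeft (T k n) t) b = 0 := fun b hb => by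
      rw [LinearMap.comp_apply, LinearMap.mulLeft_apply, mul_comm]
      exact mem_xPowIdeal_iff.1 (ht b hb) _ le_rfl
    exact ⟨dualDesc _ hker, dualDesc_mk _ hker⟩
  · rintro ⟨φ, h⟩ b hb
    refine mem_xPowIdeal_iff_residue.2 fun c => ?_
    rw [mul_comm b, mul_assoc, ← h (b * c), Ideal.Quotient.eq_zero_iff_mem.2
      (Ideal.mul_mem_right c I hb), map_zero]

lemma residueDual_mem_residueGraph {N : ℕ} {φ : (B k d n ⧸ I) →ₗ[T k n] T k n}
    (hφ : φ ∈ Submodule.torsionBySet (B k d n) ((B k d n ⧸ I) →ₗ[T k n] T k n)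
      (xPowIdeal k d n N)) :
    (residueDual N (dualInf φ), φ) ∈ residueGraph I N := fun b =>
  (residue_residueDual_mul (ψ := dualInf φ) (mem_torsionBySet_dual_iff.1 hφ) b).symm

lemma mem_torsionBySet_iff_exists_mem_residueGraph {N : ℕ} {φ : (B k d n ⧸ I) →ₗ[T k n] T k n} :
    φ ∈ Submodule.torsionBySet (B k d n) ((B k d n ⧸ I) →ₗ[T k n] T k n) (xPowIdeal k d n N) ↔
      ∃ t, (t, φ) ∈ residueGraph I N := by
  refine ⟨fun hφ => ⟨_, residueDual_mem_residueGraph hφ⟩, ?_⟩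
  rintro ⟨t, h⟩
  refine mem_torsionBySet_dual_iff.2 fun g hg => ?_
  exact (h g).trans (mem_xPowIdeal_iff.1 (Ideal.mul_mem_left _ t hg) _ le_rfl)

lemma mem_HomComp_of_mem_residueGraph {N : ℕ} {t : B k d n} {φ : (B k d n ⧸ I) →ₗ[T k n] T k n}
    (h : (t, φ) ∈ residueGraph I N) {u v : ℤ} (ht : t ∈ bigrading k d n (d * N + u, v)) :
    φ ∈ HomComp k d n I u v := by
  intro p q s hs
  obtain ⟨b, hb, rfl⟩ := mem_Scomp_iff.1 hs
  obtain ⟨hT, hzero⟩ := mem_bigrading_iff.1 (IsWeightedHomogeneous.mul ht hb) (constExponent d N)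
  rw [h b]
  refine ⟨add_comm v q ▸ hT, fun hpu => hzero ?_⟩
  rw [degree_constExponent]
  push_cast
  omega

lemma residueDual_mem_bigrading {N : ℕ} {φ : (B k d n ⧸ I) →ₗ[T k n] T k n} {u v : ℤ}
    (hφ : φ ∈ HomComp k d n I u v) :
    residueDual N (dualInf φ) ∈ bigrading k d n (d * N + u, v) := by
  refine mem_bigrading_iff.2 fun a => ?_
  rw [xCoeff_residueDual]
  split_ifs with ha
  · obtain ⟨a', ha'⟩ := exists_add_of_le ha
    have hdeg : (a.degree : ℤ) + a'.degree = d * N := by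
      rw [← Nat.cast_add, ← map_add, ← ha', degree_constExponent, Nat.cast_mul]
    obtain ⟨hT, hzero⟩ := hφ _ 0 (Ideal.Quotient.mk I (xBasis a'))
      (mem_Scomp_iff.2 ⟨_, xBasis_mem_bigrading a', rfl⟩)
    rw [ha', add_tsub_cancel_left]
    rw [Nat.cast_zero, zero_add] at hT
    exact ⟨hT, fun hau => hzero (by omega)⟩
  · exact ⟨Submodule.zero_mem _, fun _ => rfl⟩

theorem exists_torsionBySet_xPowIdeal_equiv_dual (I : Ideal (B k d n)) (N : ℕ) :
    ∃ e : Submodule.torsionBySet (B k d n) (B k d n ⧸ xPowIdeal k d n N) I ≃ₗ[B k d n]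
        Submodule.torsionBySet (B k d n) ((B k d n ⧸ I) →ₗ[T k n] T k n) (xPowIdeal k d n N),
      ∀ u v x, (∃ a ∈ bigrading k d n (d * N + u, v),
        Ideal.Quotient.mk (xPowIdeal k d n N) a = x.1) ↔ (e x).1 ∈ HomComp k d n I u v := by
  obtain ⟨e, he⟩ := exists_linearEquiv_of_rel (π := (xPowIdeal k d n N).mkQ) (ρ := LinearMap.id)
    (Submodule.mkQ_surjective _) Function.surjective_id
    (fun _ => mk_mem_torsionBySet_iff_exists_mem_residueGraph (I := I))
    (fun _ => mem_torsionBySet_iff_exists_mem_residueGraph)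
    fun _ _ h => Ideal.Quotient.eq_zero_iff_mem.trans (mem_xPowIdeal_iff_of_mem_residueGraph h)
  refine ⟨e, fun u v x => ⟨?_, fun hx => ?_⟩⟩
  · rintro ⟨a, ha, hax⟩
    obtain ⟨φ, hφ⟩ := mk_mem_torsionBySet_iff_exists_mem_residueGraph.1 (hax ▸ x.2)
    exact (he a φ x hφ).1 hax ▸ mem_HomComp_of_mem_residueGraph hφ ha
  · exact ⟨_, residueDual_mem_bigrading hx,
      (he _ _ x (residueDual_mem_residueGraph (e x).2)).2 rfl⟩

end ResidueDuality

section LocalCohomology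

variable {k d n}

theorem exists_torsionBySet_equiv_dual {f : Fin d → B k d n} {α β : Fin d → ℕ}
    (hf : RingTheory.Sequence.IsWeaklyRegular (B k d n) (List.ofFn f))
    (hbihom : ∀ i, f i ∈ weightedHomogeneousSubmodule k (bwt d n) (α i, β i)) (N : ℕ) :
    ∃ e : Submodule.torsionBySet (B k d n) (B k d n ⧸ Ideal.span (Set.range f))
          (xPowIdeal k d n N) ≃ₗ[B k d n]
        Submodule.torsionBySet (B k d n) ((B k d n ⧸ Ideal.span (Set.range f)) →ₗ[T k n] T k n)
          (xPowIdeal k d n N),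
      ∀ (a b : ℕ) s, s.1 ∈ Scomp k d n (Ideal.span (Set.range f)) (a, b) ↔
        (e s).1 ∈ HomComp k d n (Ideal.span (Set.range f)) (a - (∑ i, (α i : ℤ) - d))
          (b - ∑ i, (β i : ℤ)) := by
  let _ := weightedGradedAlgebra k (intBwt d n)
  have hX (i : Fin d) : (X (Sum.inl i) ^ (N + 1) : B k d n) ∈ bigrading k d n ((N + 1 : ℕ), 0) := by
    have := (isWeightedHomogeneous_X k (intBwt d n) (Sum.inl i)).pow (N + 1)
    simpa [intBwt, bwt] using this
  obtain ⟨e₁, he₁⟩ := exists_torsionBySet_quotient_equiv (weightedHomogeneousSubmodule k _) hf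
    (isWeaklyRegular_X_pow Sum.inl_injective (N + 1))
    (fun i => mem_bigrading_natCast_iff.2 (hbihom i)) hX
  obtain ⟨e₂, he₂⟩ := exists_torsionBySet_xPowIdeal_equiv_dual (Ideal.span (Set.range f)) N
  refine ⟨e₁.trans e₂, fun a b s => ?_⟩
  have hdeg : ((a, b) : ℤ × ℤ) + ∑ _ : Fin d, (((N + 1 : ℕ), 0) : ℤ × ℤ) -
      ∑ i, ((α i, β i) : ℤ × ℤ) =
      (d * N + (a - (∑ i, (α i : ℤ) - d)), b - ∑ i, (β i : ℤ)) := by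
    ext
    · simp only [Prod.fst_sub, Prod.fst_add, Prod.fst_sum]
      simp only [Finset.sum_const, Finset.card_univ, Fintype.card_fin, nsmul_eq_mul]
      push_cast
      ring
    · simp only [Prod.snd_sub, Prod.snd_add, Prod.snd_sum, Finset.sum_const_zero, add_zero]
  have hs := he₁ (a, b) s
  rw [hdeg] at hs
  exact mem_Scomp_iff.trans (hs.trans (he₂ _ _ _))

lemma xPowIdeal_le_mxB_pow (N : ℕ) : xPowIdeal k d n N ≤ mxB k d n ^ N := by
  rw [xPowIdeal, Ideal.span_le]
  rintro _ ⟨i, rfl⟩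
  exact Ideal.pow_le_pow_right N.le_succ
    (Ideal.pow_mem_pow (Ideal.subset_span (Set.mem_range_self i)) (N + 1))

lemma exists_mxB_pow_le_xPowIdeal (N : ℕ) : ∃ M, mxB k d n ^ M ≤ xPowIdeal k d n N := by
  refine Ideal.exists_pow_le_of_le_radical_of_fg ?_ (IsNoetherian.noetherian _)
  rw [mxB, Ideal.span_le]
  rintro _ ⟨i, rfl⟩
  exact Ideal.mem_radical_iff.2 ⟨N + 1, Ideal.subset_span ⟨i, rfl⟩⟩

lemma torsionBySet_xPowIdeal_le_H0 (I : Ideal (B k d n)) (N : ℕ) :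
    Submodule.torsionBySet (B k d n) (B k d n ⧸ I) (xPowIdeal k d n N) ≤ H0 k d n I := by
  obtain ⟨M, hM⟩ := exists_mxB_pow_le_xPowIdeal (k := k) (d := d) (n := n) N
  exact (Submodule.torsionBySet_le_torsionBySet_of_subset hM).trans
    (le_iSup (fun M : ℕ => Submodule.torsionBySet (B k d n) (B k d n ⧸ I)
      ((mxB k d n ^ M : Ideal (B k d n)) : Set (B k d n))) M)

lemma exists_H0_eq_torsionBySet_xPowIdeal (I : Ideal (B k d n)) :
    ∃ N, H0 k d n I = Submodule.torsionBySet (B k d n) (B k d n ⧸ I) (xPowIdeal k d n N) := by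
  let torsion : ℕ →o Submodule (B k d n) (B k d n ⧸ I) :=
    ⟨fun N => Submodule.torsionBySet (B k d n) (B k d n ⧸ I)
      ((mxB k d n ^ N : Ideal (B k d n)) : Set (B k d n)),
      fun _ _ h => Submodule.torsionBySet_le_torsionBySet_of_subset (Ideal.pow_le_pow_right h)⟩
  refine ⟨monotonicSequenceLimitIndex torsion,
    le_antisymm ?_ (torsionBySet_xPowIdeal_le_H0 I _)⟩
  calc H0 k d n I = torsion (monotonicSequenceLimitIndex torsion) :=
        WellFoundedGT.iSup_eq_monotonicSequenceLimit torsion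
    _ ≤ _ := Submodule.torsionBySet_le_torsionBySet_of_subset (xPowIdeal_le_mxB_pow _)

end LocalCohomology

section XComponents

variable {k d n}

/-- The component of `x`-degree `p` of an element of `B`. -/
def xComponent (p : ℕ) : B k d n →ₗ[T k n] B k d n :=
  xEquiv.symm.toLinearMap ∘ₗ homogeneousComponent p ∘ₗ xEquiv.toLinearMap

lemma xEquiv_xComponent (p : ℕ) (b : B k d n) :
    xEquiv (xComponent p b) = homogeneousComponent p (xEquiv b) :=
  xEquiv.apply_symm_apply _

lemma sum_xComponent (b : B k d n) :
    ∑ p ∈ Finset.range ((xEquiv b).totalDegree + 1), xComponent p b = b := by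
  apply xEquiv.injective
  simp only [map_sum, xEquiv_xComponent, sum_homogeneousComponent]

lemma xComponent_eq_zero {p : ℕ} {b : B k d n} (hb : b ∈ xPowIdeal k d n p) :
    xComponent p b = 0 := by
  apply xEquiv.injective
  ext1 a
  rw [xEquiv_xComponent, coeff_homogeneousComponent, map_zero, coeff_zero]
  split_ifs with ha
  · exact mem_xPowIdeal_iff.1 hb a fun i => (Finsupp.le_degree i a).trans ha.le
  · rfl

lemma isHomogeneous_xEquiv {p q : ℕ} {b : B k d n}
    (hb : b ∈ weightedHomogeneousSubmodule k (bwt d n) (p, q)) : (xEquiv b).IsHomogeneous p := by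
  intro a ha
  rw [← mem_bigrading_natCast_iff, mem_bigrading_iff] at hb
  by_contra h
  refine ha ((hb a).2 (Nat.cast_injective.ne ?_))
  rwa [Finsupp.degree_eq_weight_one]

lemma xComponent_mem_span {ι : Type*} {f : ι → B k d n} {α β : ι → ℕ}
    (hbihom : ∀ i, f i ∈ weightedHomogeneousSubmodule k (bwt d n) (α i, β i)) (p : ℕ) {b : B k d n}
    (hb : b ∈ Ideal.span (Set.range f)) : xComponent p b ∈ Ideal.span (Set.range f) := by
  let _ := gradedAlgebra (σ := Fin d) (R := T k n)
  have hhom : ((Ideal.span (Set.range f)).map (xEquiv (k := k))).IsHomogeneous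
      (homogeneousSubmodule (Fin d) (T k n)) := by
    rw [Ideal.map_span]
    refine Ideal.homogeneous_span _ _ ?_
    rintro _ ⟨_, ⟨i, rfl⟩, rfl⟩
    exact ⟨α i, isHomogeneous_xEquiv (hbihom i)⟩
  exact Ideal.symm_apply_mem_of_equiv_iff (f := (xEquiv (k := k)).toRingEquiv).2
    (homogeneousComponent_mem_of_mem hhom (Ideal.mem_map_of_mem _ hb) p)

end XComponents

section Duality

variable {k d n}

lemma torsionBySet_dual_xPowIdeal_eq_top {I : Ideal (B k d n)} {N : ℕ}
    (hI : ∀ p, ∀ b ∈ I, xComponent p b ∈ I)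
    (htorsion : ∀ p, Submodule.torsionBySet (B k d n) ((B k d n ⧸ I) →ₗ[T k n] T k n)
        (xPowIdeal k d n p) ≤
      Submodule.torsionBySet (B k d n) ((B k d n ⧸ I) →ₗ[T k n] T k n) (xPowIdeal k d n N)) :
    Submodule.torsionBySet (B k d n) ((B k d n ⧸ I) →ₗ[T k n] T k n) (xPowIdeal k d n N) = ⊤ := by
  refine eq_top_iff.2 fun φ _ => mem_torsionBySet_dual_iff.2 fun g hg => ?_
  have hvanish (p : ℕ) : φ (Ideal.Quotient.mk I (xComponent p g)) = 0 := by
    have hker : ∀ b ∈ I, (dualInf φ ∘ₗ xComponent p) b = 0 := fun b hb => by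
      have := Ideal.Quotient.eq_zero_iff_mem.2 (hI p b hb)
      exact (congrArg φ this).trans (map_zero φ)
    refine mem_torsionBySet_dual_iff.1 (htorsion p (?_ : dualDesc _ hker ∈ _)) g hg
    refine mem_torsionBySet_dual_iff.2 fun b hb => ?_
    rw [dualDesc_mk, LinearMap.comp_apply, xComponent_eq_zero hb, map_zero]
  rw [← sum_xComponent g, map_sum, map_sum]
  exact Finset.sum_eq_zero fun p _ => hvanish p

theorem duality_general {f : Fin d → B k d n} {α β : Fin d → ℕ}
    (hf : RingTheory.Sequence.IsWeaklyRegular (B k d n) (List.ofFn f))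
    (hbihom : ∀ i, f i ∈ weightedHomogeneousSubmodule k (bwt d n) (α i, β i)) :
    ∃ e : H0 k d n (Ideal.span (Set.range f)) ≃ₗ[B k d n]
        ((B k d n ⧸ Ideal.span (Set.range f)) →ₗ[T k n] T k n),
      ∀ (a b : ℕ) s, s.1 ∈ Scomp k d n (Ideal.span (Set.range f)) (a, b) ↔
        e s ∈ HomComp k d n (Ideal.span (Set.range f)) (a - (∑ i, (α i : ℤ) - d))
          (b - ∑ i, (β i : ℤ)) := by
  obtain ⟨N, hN⟩ := exists_H0_eq_torsionBySet_xPowIdeal (Ideal.span (Set.range f))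
  have htop := torsionBySet_dual_xPowIdeal_eq_top (N := N)
    (fun p _ => xComponent_mem_span hbihom p) fun p =>
      (exists_torsionBySet_equiv_dual hf hbihom p).elim fun e _ =>
        torsionBySet_le_of_equiv e ((torsionBySet_xPowIdeal_le_H0 _ p).trans hN.le)
  obtain ⟨e, he⟩ := exists_torsionBySet_equiv_dual hf hbihom N
  exact ⟨LinearEquiv.ofEq _ _ hN ≪≫ₗ e ≪≫ₗ LinearEquiv.ofTop _ htop,
    fun a b s => he a b ⟨s, hN ▸ s.2⟩⟩

end Duality

/-- **Duality theorem** (Jouanolou; Kustin–Polini–Ulrich).  There is a bihomogeneous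
isomorphism of `B`-modules `H⁰_m(S) ≅ Hom_T(S,T)(−δ,−τ)`: a `B`-linear isomorphism
which, for every bidegree `(a,b)`, identifies the `(a,b)`-component of `H⁰_m(S)` with the
`(a−δ, b−τ)`-component of `Hom_T(S,T)`. -/
theorem duality
    (f : Fin d → B k d n) (α β : Fin d → ℕ)
    (hfm : ∀ i, f i ∈ mxB k d n)
    (hreg : RingTheory.Sequence.IsRegular (B k d n) (List.ofFn f))
    (hbihom : ∀ i, f i ∈ weightedHomogeneousSubmodule k (bwt d n) (α i, β i))
    (hne : ∀ i, f i ≠ 0)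
    (hI : I = Ideal.span (Set.range f))
    (δ τ : ℤ) (hδ : δ = (∑ i, (α i : ℤ)) - d) (hτ : τ = ∑ i, (β i : ℤ)) :
    ∃ e : H0 k d n I ≃ₗ[B k d n] ((B k d n ⧸ I) →ₗ[T k n] T k n),
      (∀ (a b : ℕ) (s : H0 k d n I), (s : B k d n ⧸ I) ∈ Scomp k d n I (a, b) →
        e s ∈ HomComp k d n I ((a : ℤ) - δ) ((b : ℤ) - τ)) ∧
      (∀ (a b : ℕ) (φ : (B k d n ⧸ I) →ₗ[T k n] T k n),
        φ ∈ HomComp k d n I ((a : ℤ) - δ) ((b : ℤ) - τ) →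
        ((e.symm φ : H0 k d n I) : B k d n ⧸ I) ∈ Scomp k d n I (a, b)) := by
  subst hI hδ hτ
  obtain ⟨e, he⟩ := duality_general hreg.toIsWeaklyRegular hbihom
  exact ⟨e, fun a b s => (he a b s).1,
    fun a b φ hφ => (he a b _).2 ((e.apply_symm_apply φ).symm ▸ hφ)⟩

end Stmt0
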